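/- arXiv:2112.14044 — 7 statements merged into one kernel-verified Lean document; each statement's English description precedes it below -/
import Mathlib

section
/- Accumulation after arrangement is the identity: for every multiset m : Sym X K, PMF.map acc (arr m) = PMF.pure m. -/
universe u

/-- Accumulation: send a tuple to its multiset of values. -/
def acc {X : Type u} {K : ℕ} (v : Fin K → X) : Sym X K :=
  ⟨(List.ofFn v : List X), by simp⟩

/-- Pushforward of the uniform distribution on permutations under `σ ↦ v ∘ σ`. -/
noncomputable def perm {X : Type u} {K : ℕ} (v : Fin K → X) : PMF (Fin K → X) :=
  PMF.map (fun σ => v ∘ σ) (PMF.uniformOfFintype (Equiv.Perm (Fin K)))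

section

variable {X : Type u} {K : ℕ}

theorem acc_surjective : Function.Surjective (acc : (Fin K → X) → Sym X K) := by
  rintro ⟨⟨l⟩, rfl⟩
  exact ⟨l.get, Subtype.ext (congrArg Multiset.ofList (List.ofFn_get l))⟩

theorem acc_comp_equiv_perm (v : Fin K → X) (σ : Equiv.Perm (Fin K)) : acc (v ∘ σ) = acc v :=
  Subtype.ext (Multiset.coe_eq_coe.mpr (σ.ofFn_comp_perm v))

/-- In `perm`, `σ` elaborates as a function `Fin K → Fin K`, and the uniform distribution is
coerced monadically to a `PMF` on such functions; here `σ` is a permutation again. -/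
theorem perm_eq_map_uniformOfFintype (v : Fin K → X) :
    perm v =
      (PMF.uniformOfFintype (Equiv.Perm (Fin K))).map fun σ : Equiv.Perm (Fin K) => v ∘ σ :=
  PMF.map_comp _ _ _

theorem map_perm_of_forall_comp_eq {β : Type*} {f : (Fin K → X) → β} {v : Fin K → X}
    (hf : ∀ σ : Equiv.Perm (Fin K), f (v ∘ σ) = f v) :
    (perm v).map f = PMF.pure (f v) := by
  have hconst : f ∘ (fun σ : Equiv.Perm (Fin K) => v ∘ σ) = Function.const _ (f v) := funext hf
  rw [perm_eq_map_uniformOfFintype, PMF.map_comp, hconst, PMF.map_const]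

end

/-- Accumulation after arrangement is the identity: `acc` pushed forward along
`arr m` is the Dirac distribution at `m`. -/
theorem acc_map_arr {X : Type u} {K : ℕ} (hK : 1 ≤ K)
    (arr : Sym X K → PMF (Fin K → X))
    (harr : ∀ v : Fin K → X, arr (acc v) = perm v)
    (m : Sym X K) :
    PMF.map acc (arr m) = PMF.pure m := by
  obtain ⟨v, rfl⟩ := acc_surjective m
  rw [harr, map_perm_of_forall_comp_eq (acc_comp_equiv_perm v)]
end

section
/- Arrangement after the multinomial distribution recovers the i.i.d. distribution: for every p : PMF X and K : ℕ, (mn K p).bind arr = iid K p, i.e. the distribution on tuples obtained by sampling a K-sized multiset multinomially from p and then arranging it uniformly assigns to each tuple v : Fin K → X the mass ∏ i, p (v i). -/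
universe u

/-!
Arranging the multiset of a tuple `v` permutes the entries of `v` uniformly at random, so arranging
after the multinomial is the mixture over `σ` of the laws of `v ∘ σ` for `v` i.i.d. A product of
equal marginals is exchangeable, so all of these laws coincide with the i.i.d. law itself.
-/

/-- Exchangeability of a distribution on tuples: invariance under every permutation of the
coordinates. These are the distributions that are unchanged by a uniformly random rearrangement. -/
def IsExchangeable {ι X : Type*} (μ : PMF (ι → X)) : Prop :=
  ∀ σ : Equiv.Perm ι, μ.map (fun v => v ∘ σ) = μ

theorem map_equiv_apply {α β : Type*} (μ : PMF α) (e : α ≃ β) (b : β) :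
    μ.map e b = μ (e.symm b) := by
  classical
  simp only [PMF.map_apply, eq_comm (a := b), ← Equiv.eq_symm_apply, tsum_ite_eq]

theorem isExchangeable_of_apply_eq_prod {ι X : Type*} [Fintype ι] {μ : PMF (ι → X)}
    {w : X → ENNReal} (hμ : ∀ v, μ v = ∏ i, w (v i)) : IsExchangeable μ := by
  intro σ
  ext v
  calc μ.map (fun u => u ∘ σ) v
      = μ (v ∘ σ.symm) := map_equiv_apply μ (σ.symm.arrowCongr (Equiv.refl X)) v
    _ = ∏ i, w (v (σ.symm i)) := hμ _
    _ = ∏ i, w (v i) := Equiv.prod_comp σ.symm (fun i => w (v i))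
    _ = μ v := (hμ v).symm

theorem bind_map_eq_of_forall_map_eq {α β γ : Type*} {μ : PMF α} {ρ : PMF β} {f : γ → α → β}
    (hf : ∀ c, μ.map (f c) = ρ) (ν : PMF γ) :
    μ.bind (fun a => ν.map (fun c => f c a)) = ρ := by
  calc μ.bind (fun a => ν.map (fun c => f c a))
      = ν.bind (fun c => μ.map (f c)) := PMF.bind_comm μ ν fun a c => PMF.pure (f c a)
    _ = ν.bind (fun _ => ρ) := by simp only [hf]
    _ = ρ := PMF.bind_const ν ρ

-- The coercion in `perm` is applied to the uniform distribution itself, which it pushes forward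
-- to self-maps of `Fin K`.
theorem perm_eq_map {X : Type*} {K : ℕ} (v : Fin K → X) :
    perm v =
      (PMF.uniformOfFintype (Equiv.Perm (Fin K))).map (fun σ : Equiv.Perm (Fin K) => v ∘ σ) :=
  PMF.map_comp (fun σ : Equiv.Perm (Fin K) => ⇑σ) _ (fun g => v ∘ g)

theorem IsExchangeable.bind_perm {X : Type*} {K : ℕ} {μ : PMF (Fin K → X)}
    (hμ : IsExchangeable μ) : μ.bind perm = μ := by
  rw [funext perm_eq_map]
  exact bind_map_eq_of_forall_map_eq hμ _

theorem mn_bind_arr_general {X : Type*} {K : ℕ} {μ : PMF (Fin K → X)} (hμ : IsExchangeable μ)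
    {arr : Sym X K → PMF (Fin K → X)} (harr : ∀ v, arr (acc v) = perm v) :
    (μ.map acc).bind arr = μ := by
  calc (μ.map acc).bind arr
      = μ.bind (arr ∘ acc) := PMF.bind_map μ acc arr
    _ = μ.bind perm := congrArg μ.bind (funext harr)
    _ = μ := hμ.bind_perm

/-- Arrangement after the multinomial recovers the i.i.d. distribution:
`iid` is the distribution of `K` independent samples of `p` (mass `∏ i, p (v i)`),
the multinomial is `mn K p = PMF.map acc iid`, and `arr` is the arrangement map,
the unique map with `arr (acc v) = perm v`. -/
theorem mn_bind_arr {X : Type u} {K : ℕ} (p : PMF X)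
    (iid : PMF (Fin K → X))
    (hiid : ∀ v : Fin K → X, iid v = ∏ i, p (v i))
    (arr : Sym X K → PMF (Fin K → X))
    (harr : ∀ v : Fin K → X, arr (acc v) = perm v) :
    (PMF.map acc iid).bind arr = iid :=
  mn_bind_arr_general (isExchangeable_of_apply_eq_prod hiid) harr
end

section
/- Frequentist learning inverts the multinomial: for every p : PMF X and K ≥ 1, (mn K p).bind Flrn = p. -/
/-!
Frequentist learning from the multiset of values of a tuple `v` is the law of a uniformly chosen
coordinate of `v`. Exchanging the two random choices, the composite chooses the coordinate first and
samples the tuple afterwards, so it is the average of the marginals of the tuple. For independent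
samples of `p` every marginal is `p`.
-/

open scoped ENNReal

universe u

theorem toMultiset_acc {X : Type u} {K : ℕ} (v : Fin K → X) :
    (acc v).toMultiset = Finset.univ.val.map v :=
  (Fin.univ_val_map v).symm

theorem map_uniformOfFintype_apply {ι X : Type*} [Fintype ι] [Nonempty ι] [DecidableEq X]
    (v : ι → X) (x : X) :
    (PMF.uniformOfFintype ι).map v x =
      (Multiset.count x (Finset.univ.val.map v) : ℝ≥0∞) / (Fintype.card ι : ℝ≥0∞) := by
  have count_eq_sum : (Multiset.count x (Finset.univ.val.map v) : ℝ≥0∞) =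
      ∑ i, if x = v i then 1 else 0 := by
    rw [Multiset.count_map, Finset.sum_boole]
    rfl
  simp only [PMF.map_apply, PMF.uniformOfFintype_apply, tsum_fintype, count_eq_sum,
    div_eq_mul_inv, Finset.sum_mul, ite_mul, one_mul, zero_mul]

theorem pmf_eq_of_forall_eq_mul {X : Type*} {p q : PMF X} (c : ℝ≥0∞)
    (h : ∀ x, q x = p x * c) : q = p := by
  have hc : c = 1 := by
    rw [← q.tsum_coe, tsum_congr h, ENNReal.tsum_mul_right, p.tsum_coe, one_mul]
  ext x
  rw [h, hc, mul_one]

-- Only proportionality to `p i` is computed: the mass of the other coordinates is a constant, and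
-- normalization forces it to be `1`.
theorem map_eval_eq_of_apply_eq_prod {ι : Type*} [Fintype ι] {X : ι → Type*}
    {p : ∀ i, PMF (X i)} {q : PMF (∀ i, X i)} (hq : ∀ v, q v = ∏ i, p i (v i)) (i : ι) :
    q.map (Function.eval i) = p i := by
  classical
  let restMass (w : ∀ j : {j // j ≠ i}, X j) : ℝ≥0∞ := ∏ j : {j // j ≠ i}, p j (w j)
  have mass_split (v : ∀ j, X j) : q v = p i (v i) * restMass fun j => v j := by
    rw [hq, Fintype.prod_eq_mul_prod_subtype_ne _ i]
  refine pmf_eq_of_forall_eq_mul (∑' w, restMass w) fun x => ?_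
  calc q.map (Function.eval i) x
      = ∑' v : ∀ j, X j, if x = v i then p i (v i) * restMass fun j => v j else 0 := by
        simp only [PMF.map_apply, Function.eval, mass_split]
    _ = ∑' (y : X i) (w : ∀ j : {j // j ≠ i}, X j), if x = y then p i y * restMass w else 0 :=
        ((Equiv.piSplitAt i X).tsum_eq fun z => if x = z.1 then p i z.1 * restMass z.2 else 0).trans
          ENNReal.tsum_prod'
    _ = p i x * ∑' w, restMass w := by
        rw [tsum_eq_single x fun y hy => by simp only [hy.symm, if_false, tsum_zero]]
        simp only [if_true, ENNReal.tsum_mul_left]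

section FrequentistLearning

variable {X : Type u} [DecidableEq X] {K : ℕ} {Flrn : Sym X K → PMF X}

theorem Flrn_acc [NeZero K]
    (hFlrn : ∀ (m : Sym X K) (x : X),
      Flrn m x = (Multiset.count x m.toMultiset : ℝ≥0∞) / (K : ℝ≥0∞))
    (v : Fin K → X) : Flrn (acc v) = (PMF.uniformOfFintype (Fin K)).map v := by
  ext x
  rw [hFlrn, toMultiset_acc, map_uniformOfFintype_apply, Fintype.card_fin]

theorem map_acc_bind_Flrn [NeZero K]
    (hFlrn : ∀ (m : Sym X K) (x : X),
      Flrn m x = (Multiset.count x m.toMultiset : ℝ≥0∞) / (K : ℝ≥0∞))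
    (q : PMF (Fin K → X)) :
    (q.map acc).bind Flrn =
      (PMF.uniformOfFintype (Fin K)).bind fun i => q.map (Function.eval i) :=
  calc (q.map acc).bind Flrn
      = q.bind fun v => (PMF.uniformOfFintype (Fin K)).map v := by
        rw [PMF.bind_map]
        exact congrArg q.bind (funext (Flrn_acc hFlrn))
    _ = (PMF.uniformOfFintype (Fin K)).bind fun i => q.map (Function.eval i) :=
        PMF.bind_comm q _ fun v i => PMF.pure (v i)

end FrequentistLearning

theorem mn_bind_Flrn_general {X : Type u} [DecidableEq X] {K : ℕ} (hK : 1 ≤ K) (p : PMF X)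
    (q : PMF (Fin K → X)) (hq : ∀ i, q.map (Function.eval i) = p)
    (Flrn : Sym X K → PMF X)
    (hFlrn : ∀ (m : Sym X K) (x : X),
      Flrn m x = (Multiset.count x m.toMultiset : ℝ≥0∞) / (K : ℝ≥0∞)) :
    (PMF.map acc q).bind Flrn = p := by
  have : NeZero K := ⟨Nat.one_le_iff_ne_zero.mp hK⟩
  rw [map_acc_bind_Flrn hFlrn, funext hq, PMF.bind_const]

/-- Frequentist learning inverts the multinomial: `iid` is the distribution of
`K` independent samples of `p` (mass `∏ i, p (v i)`), the multinomial is
`mn K p = PMF.map acc iid`, and `Flrn` is frequentist learning, assigning to `x`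
the probability (multiplicity of `x`)/`K`. -/
theorem mn_bind_Flrn {X : Type u} [DecidableEq X] {K : ℕ} (hK : 1 ≤ K) (p : PMF X)
    (iid : PMF (Fin K → X))
    (hiid : ∀ v : Fin K → X, iid v = ∏ i, p (v i))
    (Flrn : Sym X K → PMF X)
    (hFlrn : ∀ (m : Sym X K) (x : X),
      Flrn m x = (Multiset.count x m.toMultiset : ℝ≥0∞) / (K : ℝ≥0∞)) :
    (PMF.map acc iid).bind Flrn = p :=
  mn_bind_Flrn_general hK p iid (map_eval_eq_of_apply_eq_prod hiid) Flrn hFlrn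
end

section
/- Draw-and-delete commutes with the multinomial: for every p : PMF X and K : ℕ, (mn (K+1) p).bind DD = mn K p. -/
universe u

/-- Uniform deletion of one coordinate: pushforward of the uniform distribution
on `Fin (K+1)` under `i ↦ v ∘ Fin.succAbove i`. -/
noncomputable def del {X : Type u} {K : ℕ} (v : Fin (K + 1) → X) : PMF (Fin K → X) :=
  PMF.map (fun i => v ∘ Fin.succAbove i) (PMF.uniformOfFintype (Fin (K + 1)))

/-! Deleting a fixed coordinate of `K + 1` independent samples leaves `K` independent samples.
Hence a uniformly random deletion mixes `K + 1` copies of the same distribution. Accumulation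
intertwines deletion on tuples with draw-and-delete on multisets. -/

section Product

variable {n : ℕ} {α : Fin (n + 1) → Type*} {p : (i : Fin (n + 1)) → PMF (α i)}
  {q : PMF ((i : Fin (n + 1)) → α i)} (i : Fin (n + 1))
  {r : PMF ((j : Fin n) → α (i.succAbove j))}

theorem bind_map_insertNth_eq_of_apply_eq_prod (hq : ∀ v, q v = ∏ k, p k (v k))
    (hr : ∀ w, r w = ∏ j, p (i.succAbove j) (w j)) :
    ((p i).bind fun a => r.map (i.insertNth a)) = q := by
  classical
  ext v
  obtain ⟨⟨b, w⟩, rfl⟩ := (Fin.insertNthEquiv α i).surjective v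
  have map_insertNth_apply (a : α i) :
      r.map (i.insertNth a) (i.insertNth b w) = if a = b then r w else 0 := by
    simp only [PMF.map_apply, Fin.insertNth_inj, eq_comm (a := b), ite_and]
    split_ifs
    · simp only [eq_comm (a := w), tsum_ite_eq]
    · exact tsum_zero
  calc
    ((p i).bind fun a => r.map (i.insertNth a)) (i.insertNth b w) = p i b * r w := by
      simp only [PMF.bind_apply, map_insertNth_apply, mul_ite, mul_zero, tsum_ite_eq]
    _ = q (i.insertNth b w) := by
      simp only [hq, hr, Fin.prod_univ_succAbove _ i, Fin.insertNth_apply_same,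
        Fin.insertNth_apply_succAbove]

theorem map_removeNth_eq_of_apply_eq_prod (hq : ∀ v, q v = ∏ k, p k (v k))
    (hr : ∀ w, r w = ∏ j, p (i.succAbove j) (w j)) :
    q.map i.removeNth = r := by
  have removeNth_comp_insertNth (a : α i) : i.removeNth ∘ i.insertNth a = id :=
    funext fun w => Fin.removeNth_insertNth i a w
  rw [← bind_map_insertNth_eq_of_apply_eq_prod i hq hr]
  simp only [PMF.map_bind, PMF.map_comp, removeNth_comp_insertNth, PMF.map_id, PMF.bind_const]

end Product

theorem bind_map_eq_of_forall_map_eq_s15 {ι α β : Type*} (m : PMF ι) {q : PMF α} {r : PMF β}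
    {f : ι → α → β} (h : ∀ i, q.map (f i) = r) :
    (q.bind fun a => m.map fun i => f i a) = r :=
  calc
    (q.bind fun a => m.map fun i => f i a) = m.bind fun i => q.map (f i) := PMF.bind_comm q m _
    _ = r := by simp only [h, PMF.bind_const]

theorem mn_bind_DD_general {X : Type u} {K : ℕ} {q : PMF (Fin (K + 1) → X)}
    {r : PMF (Fin K → X)} (hqr : ∀ i : Fin (K + 1), q.map i.removeNth = r)
    {DD : Sym X (K + 1) → PMF (Sym X K)}
    (hDD : ∀ v : Fin (K + 1) → X, DD (acc v) = PMF.map acc (del v)) :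
    (q.map acc).bind DD = r.map acc := by
  have DD_comp_acc : DD ∘ acc = fun v => (del v).map acc := funext hDD
  have bind_del : q.bind del = r := bind_map_eq_of_forall_map_eq_s15 _ hqr
  calc
    (q.map acc).bind DD = q.bind fun v => (del v).map acc := by rw [PMF.bind_map, DD_comp_acc]
    _ = (q.bind del).map acc := (PMF.map_bind q del acc).symm
    _ = r.map acc := by rw [bind_del]

/-- Draw-and-delete commutes with the multinomial: `iid n` is the distribution of
`n` independent samples of `p` (mass `∏ i, p (v i)`), the multinomial is
`mn n p = PMF.map acc (iid n)`, and `DD` is draw-and-delete, the unique map with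
`DD (acc v) = PMF.map acc (del v)`. -/
theorem mn_bind_DD {X : Type u} {K : ℕ} (p : PMF X)
    (iid : (n : ℕ) → PMF (Fin n → X))
    (hiid : ∀ (n : ℕ) (v : Fin n → X), iid n v = ∏ i, p (v i))
    (DD : Sym X (K + 1) → PMF (Sym X K))
    (hDD : ∀ v : Fin (K + 1) → X, DD (acc v) = PMF.map acc (del v)) :
    (PMF.map acc (iid (K + 1))).bind DD = PMF.map acc (iid K) :=
  mn_bind_DD_general
    (fun i => map_removeNth_eq_of_apply_eq_prod (p := fun _ => p) i (hiid (K + 1)) (hiid K)) hDD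
end

section
/- The multinomial satisfies a graded chain rule under multiset join: for every p : PMF X and K, L : ℕ, PMF.map join (mn K (mn L p)) = mn (K·L) p, where mn K (mn L p) : PMF (Sym (Sym X L) K) is the multinomial over the distribution mn L p on L-sized multisets. -/
universe u

/-- Multiset join: the sum of the `K` multisets of size `L` contained in `M`. -/
def join {X : Type u} {K L : ℕ} (M : Sym (Sym X L) K) : Sym X (K * L) :=
  ⟨(M.toMultiset.map Sym.toMultiset).join, by
    rw [Multiset.card_join, Multiset.map_map]
    rw [Multiset.map_congr rfl (fun x _ => x.2)]
    simp [Multiset.map_const', M.2, mul_comm]⟩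

/-! Sampling `K` blocks of `L` independent samples is the same as sampling `K * L` independent
samples and cutting the tuple into blocks, because a product distribution over `Σ i, κ i` curries
to a product of product distributions. Accumulating each block and then joining the resulting
multisets forgets the cutting. -/

open scoped ENNReal

theorem ennreal_prod_tsum {ι : Type*} [Fintype ι] {α : ι → Type*} (f : ∀ i, α i → ℝ≥0∞) :
    ∏ i, ∑' a, f i a = ∑' v : ∀ i, α i, ∏ i, f i (v i) := by
  refine Fintype.induction_empty_option
    (P := fun ι _ => ∀ (α : ι → Type _) (f : ∀ i, α i → ℝ≥0∞),
      ∏ i, ∑' a, f i a = ∑' v : ∀ i, α i, ∏ i, f i (v i)) ?of_equiv ?empty ?option ι α f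
  case of_equiv =>
    intro ι τ _ e ih α f
    let _ := Fintype.ofEquiv τ e.symm
    rw [← e.prod_comp, ih, ← (Equiv.piCongrLeft α e).tsum_eq]
    refine tsum_congr fun v => ?_
    rw [← e.prod_comp]
    simp only [Equiv.piCongrLeft_apply_apply]
  case empty => simp
  case option =>
    intro ι _ ih α f
    calc ∏ i, ∑' a, f i a
        = ∑' a, ∑' v : ∀ i, α (some i), f none a * ∏ i, f (some i) (v i) := by
          simp only [Fintype.prod_option, ih, ENNReal.tsum_mul_left, ENNReal.tsum_mul_right]
      _ = ∑' x : α none × ∀ i, α (some i), f none x.1 * ∏ i, f (some i) (x.2 i) :=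
          ENNReal.tsum_prod.symm
      _ = ∑' v : ∀ i, α i, ∏ i, f i (v i) := by
          rw [← (Equiv.piOptionEquivProd (β := α)).tsum_eq]
          simp only [Fintype.prod_option, Equiv.piOptionEquivProd_apply]

theorem pmf_map_equiv_apply {α β : Type*} (e : α ≃ β) (p : PMF α) (b : β) :
    p.map e b = p (e.symm b) := by
  classical
  simp only [PMF.map_apply, ← e.symm_apply_eq, eq_comm (a := e.symm b), tsum_ite_eq]

section Product

variable {ι τ : Type*} [Fintype ι] [Fintype τ]

/-- The product of a finite family of probability mass functions: the joint distribution of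
independent variables with laws `p i`. For a constant family `p` over `Fin K` this is `iid K p`. -/
noncomputable def piPMF {α : ι → Type*} (p : ∀ i, PMF (α i)) : PMF (∀ i, α i) :=
  ⟨fun v => ∏ i, p i (v i), ENNReal.summable.hasSum_iff.2 <| by
    simp only [← ennreal_prod_tsum, PMF.tsum_coe, Finset.prod_const_one]⟩

theorem piPMF_apply {α : ι → Type*} (p : ∀ i, PMF (α i)) (v : ∀ i, α i) :
    piPMF p v = ∏ i, p i (v i) :=
  rfl

theorem piPMF_map {α β : ι → Type*} (f : ∀ i, α i → β i) (p : ∀ i, PMF (α i)) :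
    (piPMF p).map (Pi.map f) = piPMF fun i => (p i).map (f i) := by
  classical
  ext w
  rw [piPMF_apply]
  simp only [PMF.map_apply, piPMF_apply, ennreal_prod_tsum, Fintype.prod_ite_zero, funext_iff,
    Pi.map_apply]

theorem piPMF_map_comp_equiv {α : τ → Type*} (e : ι ≃ τ) (p : ∀ i, PMF (α i)) :
    (piPMF p).map (fun v i => v (e i)) = piPMF fun i => p (e i) := by
  ext w
  refine (pmf_map_equiv_apply (Equiv.piCongrLeft α e).symm _ w).trans ?_
  rw [Equiv.symm_symm, piPMF_apply, piPMF_apply, ← e.prod_comp]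
  simp only [Equiv.piCongrLeft_apply_apply]

theorem piPMF_map_sigmaCurry {κ : ι → Type*} [∀ i, Fintype (κ i)] {α : ∀ i, κ i → Type*}
    (p : ∀ x : Σ i, κ i, PMF (α x.1 x.2)) :
    (piPMF p).map Sigma.curry = piPMF fun i => piPMF fun j => p ⟨i, j⟩ := by
  ext w
  refine (pmf_map_equiv_apply (Equiv.piCurry α) _ w).trans ?_
  simp only [piPMF_apply, Fintype.prod_sigma, Equiv.piCurry_symm_apply, Sigma.uncurry]

theorem piPMF_map_curry_comp_equiv {κ : ι → Type*} [∀ i, Fintype (κ i)] {α : τ → Type*}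
    (e : (Σ i, κ i) ≃ τ) (p : ∀ i, PMF (α i)) :
    (piPMF p).map (fun v i j => v (e ⟨i, j⟩)) = piPMF fun i => piPMF fun j => p (e ⟨i, j⟩) := by
  rw [← piPMF_map_sigmaCurry (α := fun i j => α (e ⟨i, j⟩)) fun x => p (e x),
    ← piPMF_map_comp_equiv e p, PMF.map_comp]
  rfl

end Product

section Multiset

variable {X : Type u} {K L : ℕ}

theorem coe_acc (v : Fin K → X) : (acc v : Multiset X) = ∑ i, {v i} :=
  calc (acc v : Multiset X) = Finset.univ.val.map v := (Fin.univ_val_map v).symm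
    _ = ∑ i, {v i} := by
      rw [← Multiset.sum_map_singleton (Finset.univ.val.map v), Multiset.map_map]
      rfl

theorem coe_join_acc (M : Fin K → Sym X L) :
    (join (acc M) : Multiset X) = ∑ k, (M k : Multiset X) := by
  change (((List.ofFn M : List (Sym X L)) : Multiset (Sym X L)).map Sym.toMultiset).sum = _
  rw [← Fin.univ_val_map, Multiset.map_map]
  rfl

theorem join_acc_acc (e : (Σ _ : Fin K, Fin L) ≃ Fin (K * L)) (w : Fin (K * L) → X) :
    join (acc fun k => acc fun l => w (e ⟨k, l⟩)) = acc w := by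
  ext1
  simp only [coe_join_acc, coe_acc, ← e.sum_comp, Fintype.sum_sigma]

end Multiset

/-- The multinomial satisfies a graded chain rule under multiset join:
`iid* ` are i.i.d. sampling distributions (mass `∏ i, q (v i)`), the multinomial
is `mn n q = PMF.map acc (iid)`, and pushing `mn K (mn L p)` forward along `join`
gives `mn (K * L) p`. -/
theorem mn_join {X : Type u} {K L : ℕ} (p : PMF X)
    (iidL : PMF (Fin L → X))
    (hiidL : ∀ v : Fin L → X, iidL v = ∏ i, p (v i))
    (iidK : PMF (Fin K → Sym X L))
    (hiidK : ∀ v : Fin K → Sym X L, iidK v = ∏ i, (PMF.map acc iidL) (v i))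
    (iidKL : PMF (Fin (K * L) → X))
    (hiidKL : ∀ v : Fin (K * L) → X, iidKL v = ∏ i, p (v i)) :
    PMF.map join (PMF.map acc iidK) = PMF.map acc iidKL := by
  obtain rfl : iidL = piPMF fun _ => p := PMF.ext hiidL
  obtain rfl : iidK = piPMF fun _ => (piPMF fun _ => p).map acc := PMF.ext hiidK
  obtain rfl : iidKL = piPMF fun _ => p := PMF.ext hiidKL
  let e : (Σ _ : Fin K, Fin L) ≃ Fin (K * L) := (Equiv.sigmaEquivProd _ _).trans finProdFinEquiv
  calc ((piPMF fun _ => (piPMF fun _ => p).map acc).map acc).map join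
      = (((piPMF fun _ => piPMF fun _ => p).map (Pi.map fun _ => acc)).map acc).map join := by
        rw [piPMF_map]
    _ = ((((piPMF fun _ => p).map fun w k l => w (e ⟨k, l⟩)).map
          (Pi.map fun _ => acc)).map acc).map join := by
        rw [piPMF_map_curry_comp_equiv]
    _ = (piPMF fun _ => p).map fun w => join (acc fun k => acc fun l => w (e ⟨k, l⟩)) := by
        simp only [PMF.map_comp]
        rfl
    _ = (piPMF fun _ => p).map acc := by simp only [join_acc_acc]
end

section
/- Multinomials satisfy the convolution property: for every p : PMF X and K, L : ℕ, sampling independently from mn K p and mn L p and adding the resulting multisets gives mn (K+L) p; that is, (mn K p).bind (fun m => PMF.map (fun n => m + n) (mn L p)) = mn (K+L) p. -/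
universe u

/-- The sum `m + n : Sym X (K + L)` of multisets: addition of the underlying
multisets. -/
instance {X : Type u} {K L : ℕ} : HAdd (Sym X K) (Sym X L) (Sym X (K + L)) :=
  ⟨Sym.append⟩

open scoped ENNReal

section PMFMap₂

variable {α β γ α' β' γ' : Type*}

/-- The law of `f a b` for independent samples `a` from `P` and `b` from `Q`, for concatenating
random tuples and adding random multisets alike; written with `bind` instead of as the image of a
product law. -/
noncomputable def pmfMap₂ (f : α → β → γ) (P : PMF α) (Q : PMF β) : PMF γ :=
  P.bind fun a => Q.map (f a)

theorem pmf_map_apply_of_injective {f : α → β} (hf : f.Injective) (P : PMF α) (a : α) :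
    P.map f (f a) = P a := by
  classical
  simp [PMF.map_apply, hf.eq_iff]

theorem pmfMap₂_apply_of_injective2 {f : α → β → γ} (hf : Function.Injective2 f)
    (P : PMF α) (Q : PMF β) (a : α) (b : β) :
    pmfMap₂ f P Q (f a b) = P a * Q b := by
  have map_eq_zero (a' : α) (ha' : a' ≠ a) : Q.map (f a') (f a b) = 0 := by
    rw [PMF.apply_eq_zero_iff, PMF.mem_support_map_iff]
    rintro ⟨b', -, h⟩
    exact ha' (hf h).1
  calc pmfMap₂ f P Q (f a b)
      = ∑' a', P a' * Q.map (f a') (f a b) := PMF.bind_apply ..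
    _ = P a * Q.map (f a) (f a b) :=
        tsum_eq_single a fun a' ha' => by rw [map_eq_zero a' ha', mul_zero]
    _ = P a * Q b := by rw [pmf_map_apply_of_injective (hf.right a)]

theorem map_pmfMap₂_distrib {f : α → β → γ} {f' : α' → β' → γ'}
    {g : γ → γ'} {g₁ : α → α'} {g₂ : β → β'}
    (h : ∀ a b, g (f a b) = f' (g₁ a) (g₂ b)) (P : PMF α) (Q : PMF β) :
    (pmfMap₂ f P Q).map g = pmfMap₂ f' (P.map g₁) (Q.map g₂) := by
  simp only [pmfMap₂, PMF.map_bind, PMF.bind_map, PMF.map_comp, Function.comp_def, h]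

end PMFMap₂

section Tuples

variable {X : Type u} {K L : ℕ}

theorem append_injective2 :
    Function.Injective2 (Fin.append : (Fin K → X) → (Fin L → X) → Fin (K + L) → X) :=
  fun v v' w w' h =>
    Prod.ext_iff.1 ((Fin.appendEquiv K L).injective (a₁ := (v, w)) (a₂ := (v', w')) h)

theorem acc_append (v : Fin K → X) (w : Fin L → X) :
    acc (Fin.append v w) = acc v + acc w :=
  Subtype.ext (congrArg Multiset.ofList (List.ofFn_fin_append v w))

theorem pmfMap₂_append_apply_eq_prod {q : Fin (K + L) → X → ℝ≥0∞}
    {P : PMF (Fin K → X)} (hP : ∀ v, P v = ∏ i, q (Fin.castAdd L i) (v i))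
    {Q : PMF (Fin L → X)} (hQ : ∀ w, Q w = ∏ i, q (Fin.natAdd K i) (w i))
    (u : Fin (K + L) → X) :
    pmfMap₂ Fin.append P Q u = ∏ i, q i (u i) := by
  obtain ⟨⟨v, w⟩, rfl⟩ := (Fin.appendEquiv K L).surjective u
  calc pmfMap₂ Fin.append P Q (Fin.append v w)
      = P v * Q w := pmfMap₂_apply_of_injective2 append_injective2 P Q v w
    _ = ∏ i, q i (Fin.append v w i) := by
        simp only [hP, hQ, Fin.prod_univ_add, Fin.append_left, Fin.append_right]

end Tuples

theorem mn_convolution_general {X : Type u} {K L : ℕ} (q : Fin (K + L) → X → ℝ≥0∞)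
    (indK : PMF (Fin K → X))
    (hindK : ∀ v, indK v = ∏ i, q (Fin.castAdd L i) (v i))
    (indL : PMF (Fin L → X))
    (hindL : ∀ w, indL w = ∏ i, q (Fin.natAdd K i) (w i))
    (indKL : PMF (Fin (K + L) → X))
    (hindKL : ∀ u, indKL u = ∏ i, q i (u i)) :
    (PMF.map acc indK).bind (fun m => PMF.map (fun n => m + n) (PMF.map acc indL)) =
      PMF.map acc indKL := by
  have concat_eq : pmfMap₂ Fin.append indK indL = indKL :=
    PMF.ext fun u => (pmfMap₂_append_apply_eq_prod hindK hindL u).trans (hindKL u).symm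
  calc pmfMap₂ (fun m n => m + n) (indK.map acc) (indL.map acc)
      = (pmfMap₂ Fin.append indK indL).map acc := (map_pmfMap₂_distrib acc_append indK indL).symm
    _ = indKL.map acc := by rw [concat_eq]

/-- Multinomials satisfy the convolution property: sampling independently from
`mn K p = PMF.map acc iidK` and `mn L p = PMF.map acc iidL` and adding the
resulting multisets gives `mn (K+L) p = PMF.map acc iidKL`, where `iid*` are the
i.i.d. sampling distributions (mass `∏ i, p (v i)`). -/
theorem mn_convolution {X : Type u} {K L : ℕ} (p : PMF X)
    (iidK : PMF (Fin K → X))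
    (hiidK : ∀ v : Fin K → X, iidK v = ∏ i, p (v i))
    (iidL : PMF (Fin L → X))
    (hiidL : ∀ v : Fin L → X, iidL v = ∏ i, p (v i))
    (iidKL : PMF (Fin (K + L) → X))
    (hiidKL : ∀ v : Fin (K + L) → X, iidKL v = ∏ i, p (v i)) :
    (PMF.map acc iidK).bind (fun m => PMF.map (fun n => m + n) (PMF.map acc iidL)) =
      PMF.map acc iidKL :=
  mn_convolution_general (fun _ => p) iidK hiidK iidL hiidL iidKL hiidKL
end

section
/- Hypergeometric after multinomial is multinomial: for every p : PMF X and K ≤ L, (mn L p).bind (hg L K) = mn K p, where hg L K is the hypergeometric map given by (L−K)-fold iterated draw-and-delete. -/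
universe u

/-- The `d`-fold Kleisli iterate of draw-and-delete `DD`,
mapping `Sym X (K + d)` to distributions on `Sym X K`. -/
noncomputable def iterDD {X : Type u} (DD : {n : ℕ} → Sym X (n + 1) → PMF (Sym X n)) :
    (d : ℕ) → {K : ℕ} → Sym X (K + d) → PMF (Sym X K)
  | 0, _, m => PMF.pure m
  | d + 1, _, m => (DD m).bind (iterDD DD d)

/- Deleting any fixed coordinate of an i.i.d. sample of size `n + 1` leaves an i.i.d. sample of size
`n`, hence so does deleting a uniformly chosen one. Through `acc` this says that draw-and-delete
sends `mn (n + 1) p` to `mn n p`, and the hypergeometric map iterates this step. -/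

section Product

theorem bind_map_insertNth_apply {n : ℕ} {X : Fin (n + 1) → Type*} (i : Fin (n + 1))
    (p : PMF (X i)) (q : PMF (∀ j, X (i.succAbove j))) (v : ∀ j, X j) :
    (p.bind fun x => q.map (i.insertNth x)) v = p (v i) * q (i.removeNth v) := by
  classical
  have map_apply (x : X i) :
      q.map (i.insertNth x) v = if x = v i then q (i.removeNth v) else 0 := by
    simp only [PMF.map_apply, Fin.eq_insertNth_iff, ite_and, eq_comm (a := v i)]
    split_ifs <;> simp
  simp only [PMF.bind_apply, map_apply, mul_ite, mul_zero, tsum_ite_eq]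

/-- The joint distribution of independent coordinates with marginals `q i`. Building it by
successive binds makes it a `PMF` without computing a total mass; `productPMF_apply` recovers the
product formula for the mass. -/
noncomputable def productPMF :
    {n : ℕ} → {X : Fin n → Type u} → (∀ i, PMF (X i)) → PMF (∀ i, X i)
  | 0, _, _ => PMF.pure finZeroElim
  | _ + 1, _, q => (q 0).bind fun x => (productPMF (Fin.removeNth 0 q)).map (Fin.insertNth 0 x)

theorem productPMF_apply {n : ℕ} {X : Fin n → Type u} (q : ∀ i, PMF (X i)) (v : ∀ i, X i) :
    productPMF q v = ∏ i, q i (v i) := by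
  induction n with
  | zero => simp [productPMF, PMF.pure_apply, Subsingleton.elim v finZeroElim]
  | succ n ih =>
    simp only [productPMF, bind_map_insertNth_apply, ih, Fin.prod_univ_succAbove _ 0,
      Fin.removeNth_apply]

variable {n : ℕ} {X : Fin (n + 1) → Type u} (q : ∀ i, PMF (X i)) (i : Fin (n + 1))

theorem productPMF_eq_bind_map_insertNth :
    productPMF q = (q i).bind fun x => (productPMF (i.removeNth q)).map (i.insertNth x) := by
  ext v
  simp only [bind_map_insertNth_apply, productPMF_apply, Fin.prod_univ_succAbove _ i,
    Fin.removeNth_apply]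

theorem map_removeNth_productPMF :
    (productPMF q).map i.removeNth = productPMF (i.removeNth q) := by
  have removeNth_comp_insertNth (x : X i) : i.removeNth ∘ i.insertNth x = id :=
    funext fun w => i.removeNth_insertNth x w
  simp only [productPMF_eq_bind_map_insertNth q i, PMF.map_bind, PMF.map_comp,
    removeNth_comp_insertNth, PMF.map_id, PMF.bind_const]

end Product

section Multinomial

variable {X : Type u}

/-- The distribution of `n` independent samples from `p`. -/
noncomputable def iid (n : ℕ) (p : PMF X) : PMF (Fin n → X) :=
  productPMF fun _ => p

theorem eq_iid_of_apply_eq_prod {p : PMF X} {n : ℕ} {q : PMF (Fin n → X)}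
    (hq : ∀ v, q v = ∏ i, p (v i)) : q = iid n p :=
  PMF.ext fun v => (hq v).trans (productPMF_apply _ v).symm

theorem bind_del {n : ℕ} (q : PMF (Fin (n + 1) → X)) :
    q.bind del = (PMF.uniformOfFintype (Fin (n + 1))).bind fun i => q.map i.removeNth :=
  PMF.bind_comm _ _ _

theorem iid_bind_del (n : ℕ) (p : PMF X) : (iid (n + 1) p).bind del = iid n p := by
  have marginal (i : Fin (n + 1)) : (iid (n + 1) p).map i.removeNth = iid n p :=
    map_removeNth_productPMF (fun _ => p) i
  simp only [bind_del, marginal, PMF.bind_const]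

/-- The multinomial distribution: the multiset of values of `n` independent samples from `p`. -/
noncomputable def mn (n : ℕ) (p : PMF X) : PMF (Sym X n) :=
  (iid n p).map acc

theorem mn_bind_drawDelete {n : ℕ} (p : PMF X) {D : Sym X (n + 1) → PMF (Sym X n)}
    (hD : ∀ v, D (acc v) = (del v).map acc) : (mn (n + 1) p).bind D = mn n p := by
  calc (mn (n + 1) p).bind D
      = (iid (n + 1) p).bind fun v => D (acc v) := PMF.bind_map _ _ _
    _ = ((iid (n + 1) p).bind del).map acc := by simp only [hD, PMF.map_bind]
    _ = mn n p := by rw [iid_bind_del, mn]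

end Multinomial

theorem bind_iterDD {X : Type u} {DD : {n : ℕ} → Sym X (n + 1) → PMF (Sym X n)}
    {μ : (n : ℕ) → PMF (Sym X n)} (hμ : ∀ n, (μ (n + 1)).bind DD = μ n) (K d : ℕ) :
    (μ (K + d)).bind (iterDD DD d) = μ K := by
  induction d with
  | zero => exact PMF.bind_pure _
  | succ d ih =>
    calc (μ (K + d + 1)).bind (fun m => (DD m).bind (iterDD DD d))
        = ((μ (K + d + 1)).bind DD).bind (iterDD DD d) := (PMF.bind_bind _ _ _).symm
      _ = μ K := by rw [hμ, ih]

theorem bind_iterDD_cast {X : Type u} {DD : {n : ℕ} → Sym X (n + 1) → PMF (Sym X n)}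
    {μ : (n : ℕ) → PMF (Sym X n)} (hμ : ∀ n, (μ (n + 1)).bind DD = μ n) {K L d : ℕ}
    (h : L = K + d) : (μ L).bind (fun m => iterDD DD d (Sym.cast h m)) = μ K := by
  subst h
  exact bind_iterDD hμ K d

/-- Hypergeometric after multinomial is multinomial: for `K ≤ L`, binding the
multinomial `mn L p = PMF.map acc iidL` with the hypergeometric map
`hg L K` (the `(L-K)`-fold iterated draw-and-delete) yields
`mn K p = PMF.map acc iidK`.  Here `iid*` are the i.i.d. sampling distributions
(mass `∏ i, p (v i)`) and `DD` is draw-and-delete, the unique map with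
`DD (acc v) = PMF.map acc (del v)`. -/
theorem mn_bind_hg {X : Type u} {K L : ℕ} (hKL : K ≤ L) (p : PMF X)
    (DD : {n : ℕ} → Sym X (n + 1) → PMF (Sym X n))
    (hDD : ∀ {n : ℕ} (v : Fin (n + 1) → X), DD (acc v) = PMF.map acc (del v))
    (iidL : PMF (Fin L → X))
    (hiidL : ∀ v : Fin L → X, iidL v = ∏ i, p (v i))
    (iidK : PMF (Fin K → X))
    (hiidK : ∀ v : Fin K → X, iidK v = ∏ i, p (v i)) :
    (PMF.map acc iidL).bind
        (fun m => iterDD DD (L - K) (Sym.cast (Nat.add_sub_cancel' hKL).symm m)) =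
      PMF.map acc iidK := by
  have mn_bind_DD (n : ℕ) : (mn (n + 1) p).bind DD = mn n p := mn_bind_drawDelete p hDD
  rw [eq_iid_of_apply_eq_prod hiidL, eq_iid_of_apply_eq_prod hiidK]
  exact bind_iterDD_cast (μ := fun n => mn n p) mn_bind_DD (Nat.add_sub_cancel' hKL).symm
end
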